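/- arXiv:2106.11604 — 2 statements merged into one kernel-verified Lean document; each statement's English description precedes it below -/
import Mathlib

section
/- Let A be the shift operator on L²(ℝ), let n ∈ ℕ, let κ_{n,0}, …, κ_{n,n} be real numbers, set g_n := Σ_{k=0}^n k!·κ_{n,k}·1_{[-k,-k+1]} ∈ L²(ℝ), let β ∈ ℝ and define the bounded operator Ā_n on L²(ℝ) by Ā_n z := A z − β·⟨g_n, z⟩·1_{[0,1]}. Define γ(0,0) := 1 and, for k ≥ 1, γ(i,k) := γ(i−1,k−1) for i = 1, …, k and γ(0,k) := Σ_{j=0}^{(k−1)∧n} (−β)·j!·κ_{n,j}·γ(j,k−1). Then for every k ∈ ℕ one has Ā_n^k 1_{[0,1]} = Σ_{i=0}^k γ(i,k)·1_{[-i,-i+1]} in L²(ℝ). -/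
open MeasureTheory

/-- The indicator function of the interval `[a, b]`, regarded as an element of `L²(ℝ)`. -/
noncomputable def ind (a b : ℝ) : Lp ℝ 2 (volume : Measure ℝ) :=
  indicatorConstLp 2 (measurableSet_Icc : MeasurableSet (Set.Icc a b))
    (by rw [Real.volume_Icc]; exact ENNReal.ofReal_ne_top) (1 : ℝ)

/-- The coefficients `γ(i,k)`: `γ(0,0) = 1` and, for `k ≥ 1`, `γ(i,k) = γ(i−1,k−1)` for
`i = 1, …, k` and `γ(0,k) = ∑_{j=0}^{(k−1)∧n} (−β) j! κ_{n,j} γ(j,k−1)`. -/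
noncomputable def gam (β : ℝ) (n : ℕ) (κ : ℕ → ℝ) : ℕ → ℕ → ℝ
  | i, 0 => if i = 0 then 1 else 0
  | 0, k + 1 => ∑ j ∈ Finset.range (min k n + 1),
      (-β) * (j.factorial : ℝ) * κ j * gam β n κ j k
  | i + 1, k + 1 => gam β n κ i k

/-!
The unit-interval indicators `e i = 1_{[-i,-i+1]}` form an orthonormal family on which `A` acts as
the one-sided shift `e i ↦ e (i + 1)`. Hence `Ā` moves the coefficient of `e i` to `e (i + 1)`, and
the coefficient it creates at `e 0` is `-β ⟨g, ·⟩`, which orthonormality turns into the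
recursion for `γ(0, k)`.
-/

open scoped InnerProductSpace

section Indicator

variable {α ι 𝕜 : Type*} [RCLike 𝕜] [MeasurableSpace α] {μ : Measure α}

theorem orthonormal_indicatorConstLp_one {s : ι → Set α} (hs : ∀ i, MeasurableSet (s i))
    (hμs : ∀ i, μ (s i) = 1) (hd : Pairwise (Function.onFun (AEDisjoint μ) s)) :
    Orthonormal 𝕜 fun i =>
      indicatorConstLp 2 (hs i) ((hμs i).trans_ne ENNReal.one_ne_top) (1 : 𝕜) := by
  classical
  refine orthonormal_iff_ite.mpr fun i j => ?_
  rw [L2.inner_indicatorConstLp_one_indicatorConstLp_one (hs i) (hs j)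
    ((hμs i).trans_ne ENNReal.one_ne_top) ((hμs j).trans_ne ENNReal.one_ne_top)]
  split_ifs with hij
  · rw [← hij, Set.inter_self, measureReal_def, hμs, ENNReal.toReal_one, RCLike.ofReal_one]
  · rw [measureReal_def, hd hij, ENNReal.toReal_zero, RCLike.ofReal_zero]

theorem pairwise_aedisjoint_Icc_intCast (μ : Measure ℝ) [NullSingletonClass μ] :
    Pairwise (Function.onFun (AEDisjoint μ) fun m : ℤ => Set.Icc (m : ℝ) (m + 1)) :=
  fun _ _ hmn => (Set.pairwise_disjoint_Ico_intCast ℝ hmn).aedisjoint.congr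
    Ico_ae_eq_Icc.symm Ico_ae_eq_Icc.symm

theorem orthonormal_ind_intCast : Orthonormal ℝ fun m : ℤ => ind m (m + 1) :=
  orthonormal_indicatorConstLp_one _ (by simp) (pairwise_aedisjoint_Icc_intCast volume)

theorem orthonormal_ind_neg_natCast :
    Orthonormal ℝ fun i : ℕ => ind (-(i : ℝ)) (-(i : ℝ) + 1) := by
  simpa [Function.comp_def] using
    orthonormal_ind_intCast.comp (fun i : ℕ => -(i : ℤ)) (neg_injective.comp Nat.cast_injective)

theorem eq_ind_sub_of_ae_eq_comp_add {a b t : ℝ} {f : Lp ℝ 2 (volume : Measure ℝ)}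
    (hf : f =ᵐ[volume] fun x => ind a b (x + t)) : f = ind (a - t) (b - t) := by
  have f_eq_comp : f = Lp.compMeasurePreserving (· + t) (measurePreserving_add_right volume t)
      (ind a b) :=
    Lp.ext (hf.trans (Lp.coeFn_compMeasurePreserving _ _).symm)
  simp only [f_eq_comp, ind, Lp.indicatorConstLp_compMeasurePreserving, Set.preimage_add_const_Icc]

theorem shift_ind_neg_natCast {A : Lp ℝ 2 (volume : Measure ℝ) → Lp ℝ 2 (volume : Measure ℝ)}
    (hA : ∀ f : Lp ℝ 2 (volume : Measure ℝ), (A f : ℝ → ℝ) =ᵐ[volume] fun x => f (x + 1)) (i : ℕ) :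
    A (ind (-(i : ℝ)) (-(i : ℝ) + 1)) =
      ind (-((i + 1 : ℕ) : ℝ)) (-((i + 1 : ℕ) : ℝ) + 1) := by
  rw [eq_ind_sub_of_ae_eq_comp_add (hA _)]
  congr 1 <;> push_cast <;> ring

end Indicator

section Orthonormal

variable {ι 𝕜 E : Type*} [RCLike 𝕜] [NormedAddCommGroup E] [InnerProductSpace 𝕜 E]

theorem inner_sum_smul_sum_smul_of_orthonormal [DecidableEq ι] {v : ι → E} (hv : Orthonormal 𝕜 v)
    (a b : ι → 𝕜) (s t : Finset ι) :
    ⟪∑ i ∈ s, a i • v i, ∑ j ∈ t, b j • v j⟫_𝕜 = ∑ i ∈ s ∩ t, starRingEnd 𝕜 (a i) * b i := by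
  rw [Finset.inter_comm]
  simp only [sum_inner, inner_sum, inner_smul_left, inner_smul_right, orthonormal_iff_ite.mp hv,
    mul_ite, mul_one, mul_zero, Finset.sum_ite_eq', ite_mul, zero_mul, Finset.sum_ite_mem,
    mul_comm (b _)]

end Orthonormal

section RankOnePerturbation

variable {E : Type*} [NormedAddCommGroup E] [InnerProductSpace ℝ E] {v : ℕ → E}

theorem gam_zero_succ_eq_neg_inner (hv : Orthonormal ℝ v) (β : ℝ) (n : ℕ) (κ : ℕ → ℝ) (k : ℕ) :
    gam β n κ 0 (k + 1) =
      -(β * ⟪∑ j ∈ Finset.range (n + 1), ((j.factorial : ℝ) * κ j) • v j,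
        ∑ i ∈ Finset.range (k + 1), gam β n κ i k • v i⟫_ℝ) := by
  rw [inner_sum_smul_sum_smul_of_orthonormal hv, Finset.range_inter_range, min_add_add_right,
    min_comm, ← neg_mul, Finset.mul_sum, gam]
  exact Finset.sum_congr rfl fun j _ => by rw [conj_trivial]; ring

theorem pow_rank_one_perturbed_shift_indicator_general (hv : Orthonormal ℝ v)
    {A : E →ₗ[ℝ] E} (hA : ∀ i, A (v i) = v (i + 1)) (n : ℕ) (κ : ℕ → ℝ) (β : ℝ) {g : E}
    (hg : g = ∑ k ∈ Finset.range (n + 1), ((k.factorial : ℝ) * κ k) • v k)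
    {B : E → E} (hB : ∀ z, B z = A z - (β * ⟪g, z⟫_ℝ) • v 0) (k : ℕ) :
    B^[k] (v 0) = ∑ i ∈ Finset.range (k + 1), gam β n κ i k • v i := by
  induction k with
  | zero => simp [gam]
  | succ k ih =>
    have shifted : A (∑ i ∈ Finset.range (k + 1), gam β n κ i k • v i) =
        ∑ i ∈ Finset.range (k + 1), gam β n κ (i + 1) (k + 1) • v (i + 1) := by
      simp only [map_sum, map_smul, hA, gam]
    rw [Function.iterate_succ_apply', ih, hB, shifted, Finset.sum_range_succ' _ (k + 1),
      gam_zero_succ_eq_neg_inner hv, ← hg, neg_smul, sub_eq_add_neg]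

end RankOnePerturbation

/-- Let `A` be the shift operator on `L²(ℝ)`, `g_n := ∑_{k=0}^n k! κ_{n,k} 1_{[-k,-k+1]}` and
`Ā_n z := A z − β ⟨g_n, z⟩ 1_{[0,1]}`.  Then for every `k ∈ ℕ`,
`Ā_n^k 1_{[0,1]} = ∑_{i=0}^k γ(i,k) 1_{[-i,-i+1]}` in `L²(ℝ)`. -/
theorem pow_rank_one_perturbed_shift_indicator
    (A : Lp ℝ 2 (volume : Measure ℝ) →L[ℝ] Lp ℝ 2 (volume : Measure ℝ))
    (hA : ∀ f : Lp ℝ 2 (volume : Measure ℝ), (A f : ℝ → ℝ) =ᵐ[volume] fun x => f (x + 1))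
    (n : ℕ) (κ : ℕ → ℝ) (β : ℝ)
    (gn : Lp ℝ 2 (volume : Measure ℝ))
    (hgn : gn = ∑ k ∈ Finset.range (n + 1),
      ((k.factorial : ℝ) * κ k) • ind (-(k : ℝ)) (-(k : ℝ) + 1))
    (Abar : Lp ℝ 2 (volume : Measure ℝ) →L[ℝ] Lp ℝ 2 (volume : Measure ℝ))
    (hAbar : ∀ z, Abar z = A z - (β * (inner ℝ gn z : ℝ)) • ind 0 1) :
    ∀ k : ℕ, (Abar ^ k) (ind 0 1) =
      ∑ i ∈ Finset.range (k + 1), gam β n κ i k • ind (-(i : ℝ)) (-(i : ℝ) + 1) := by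
  intro k
  simpa [FunLike.coe_pow_eq_iterate] using pow_rank_one_perturbed_shift_indicator_general
    orthonormal_ind_neg_natCast (A := A.toLinearMap) (shift_ind_neg_natCast hA) n κ β hgn
    (by simpa using hAbar) k
end

section
/- Let A be the shift operator on L²(ℝ) and let N ∈ ℕ. Then the monomial kernel K(t) = t^N is liftable: for every t ≥ 0, t^N = ⟨N!·1_{[-N,-N+1]}, exp(tA) 1_{[0,1]}⟩_{L²(ℝ)}. -/
open MeasureTheory

/-! If the orbit `e, A e, A² e, …` is orthonormal, then pairing
`exp (t A) e = ∑ (tⁿ / n!) Aⁿ e` with `Aᴺ e` extracts the coefficient `tᴺ / N!`. The translates of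
the indicator of a unit interval under a shift of length at least one form such an orbit, since
any two of them overlap in a null set. -/

section InnerProductSpace

variable {𝕜 E : Type*} [RCLike 𝕜] [NormedAddCommGroup E]

theorem hasSum_exp_smul_apply [NormedSpace 𝕜 E] [CompleteSpace E]
    (A : E →L[𝕜] E) (t : 𝕜) (x : E) :
    HasSum (fun n : ℕ => (t ^ n / n.factorial) • (A ^ n) x) (NormedSpace.exp (t • A) x) := by
  have hexp := (NormedSpace.exp_series_hasSum_exp' (𝕂 := 𝕜) (t • A)).mapL
    (ContinuousLinearMap.apply 𝕜 E x)
  simpa [smul_pow, smul_smul, div_eq_inv_mul] using hexp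

variable [InnerProductSpace 𝕜 E]

theorem inner_eq_coeff_of_orthonormal_of_hasSum {ι : Type*} {v : ι → E} (hv : Orthonormal 𝕜 v)
    {c : ι → 𝕜} {y : E} (hy : HasSum (fun i => c i • v i) y) (i : ι) :
    inner 𝕜 (v i) y = c i := by
  have hinner : HasSum (fun j => inner 𝕜 (v i) (c j • v j)) (inner 𝕜 (v i) y) :=
    hy.mapL (innerSL 𝕜 (v i))
  have hsingle : HasSum (fun j => inner 𝕜 (v i) (c j • v j)) (inner 𝕜 (v i) (c i • v i)) :=
    hasSum_single i fun j hj => by rw [inner_smul_right, hv.inner_eq_zero hj.symm, mul_zero]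
  rw [hinner.unique hsingle, inner_smul_right,
    inner_self_eq_one_of_norm_eq_one (hv.norm_eq_one i), mul_one]

theorem inner_factorial_smul_pow_apply_exp_smul_apply [CompleteSpace E] {A : E →L[𝕜] E} {e : E}
    (he : Orthonormal 𝕜 fun n : ℕ => (A ^ n) e) (N : ℕ) (t : 𝕜) :
    inner 𝕜 ((N.factorial : 𝕜) • (A ^ N) e) (NormedSpace.exp (t • A) e) = t ^ N := by
  have hcoeff : inner 𝕜 ((A ^ N) e) (NormedSpace.exp (t • A) e) = t ^ N / N.factorial :=
    inner_eq_coeff_of_orthonormal_of_hasSum he (hasSum_exp_smul_apply A t e) N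
  have hfactorial : (N.factorial : 𝕜) ≠ 0 := Nat.cast_ne_zero.mpr N.factorial_ne_zero
  rw [inner_smul_left, hcoeff, map_natCast, mul_div_cancel₀ _ hfactorial]

end InnerProductSpace

theorem inner_ind_ind (a b c d : ℝ) :
    inner ℝ (ind a b) (ind c d) = max (min b d - max a c) 0 := by
  unfold ind
  rw [L2.real_inner_indicatorConstLp_one_indicatorConstLp_one measurableSet_Icc measurableSet_Icc
    measure_Icc_lt_top.ne measure_Icc_lt_top.ne, Set.Icc_inter_Icc, Real.volume_real_Icc]

theorem orthonormal_ind_add_one {ι : Type*} {x : ι → ℝ}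
    (hx : Pairwise fun i j => 1 ≤ |x i - x j|) :
    Orthonormal ℝ fun i => ind (x i) (x i + 1) := by
  classical
  refine orthonormal_iff_ite.mpr fun i j => ?_
  rw [inner_ind_ind, min_add_add_right]
  split_ifs with hij
  · simp [hij]
  · have hdist : 1 ≤ max (x i) (x j) - min (x i) (x j) := by
      simpa only [max_sub_min_eq_abs'] using hx hij
    exact max_eq_right (by linarith)

theorem compMeasurePreserving_add_right_ind (a b c : ℝ) :
    Lp.compMeasurePreserving (· + c) (measurePreserving_add_right volume c) (ind a b) =
      ind (a - c) (b - c) := by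
  simp only [ind, Lp.indicatorConstLp_compMeasurePreserving, Set.preimage_add_const_Icc]

/-- `A` is the shift operator `f ↦ f (· + c)` on `L²(ℝ)`; elements of `L²(ℝ)` being classes of
functions, the identity is required almost everywhere. -/
def IsShift (c : ℝ) (A : Lp ℝ 2 (volume : Measure ℝ) →L[ℝ] Lp ℝ 2 (volume : Measure ℝ)) : Prop :=
  ∀ f : Lp ℝ 2 (volume : Measure ℝ), (A f : ℝ → ℝ) =ᵐ[volume] fun x => f (x + c)

namespace IsShift

variable {c : ℝ} {A : Lp ℝ 2 (volume : Measure ℝ) →L[ℝ] Lp ℝ 2 (volume : Measure ℝ)}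

theorem apply_ind (hA : IsShift c A) (a b : ℝ) : A (ind a b) = ind (a - c) (b - c) := by
  rw [← compMeasurePreserving_add_right_ind]
  exact Lp.ext ((hA _).trans (Lp.coeFn_compMeasurePreserving _ _).symm)

theorem pow_apply_ind (hA : IsShift c A) (n : ℕ) (a b : ℝ) :
    (A ^ n) (ind a b) = ind (a - n * c) (b - n * c) := by
  induction n with
  | zero => simp
  | succ n ih =>
    rw [pow_succ', mul_apply_eq_comp, ih, hA.apply_ind]
    push_cast
    congr 1 <;> ring

theorem pow_apply_ind_add_one (hA : IsShift c A) (n : ℕ) (a : ℝ) :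
    (A ^ n) (ind a (a + 1)) = ind (a - n * c) (a - n * c + 1) := by
  rw [hA.pow_apply_ind, sub_add_eq_add_sub]

theorem orthonormal_pow_apply_ind_add_one (hA : IsShift c A) (hc : 1 ≤ |c|) (a : ℝ) :
    Orthonormal ℝ fun n : ℕ => (A ^ n) (ind a (a + 1)) := by
  simp only [hA.pow_apply_ind_add_one]
  refine orthonormal_ind_add_one fun m n hmn => ?_
  have hdist : (1 : ℝ) ≤ |(n : ℝ) - m| := by
    exact_mod_cast Int.one_le_abs (sub_ne_zero.mpr (Nat.cast_injective.ne hmn.symm))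
  calc 1 ≤ |(n : ℝ) - m| * |c| := one_le_mul_of_one_le_of_one_le hdist hc
    _ = |a - m * c - (a - n * c)| := by rw [← abs_mul]; ring_nf

end IsShift

theorem monomial_kernel_liftable_general {c : ℝ} (hc : 1 ≤ |c|)
    {A : Lp ℝ 2 (volume : Measure ℝ) →L[ℝ] Lp ℝ 2 (volume : Measure ℝ)} (hA : IsShift c A)
    (a : ℝ) (N : ℕ) (t : ℝ) :
    t ^ N = inner ℝ ((N.factorial : ℝ) • ind (a - N * c) (a - N * c + 1))
      (NormedSpace.exp (t • A) (ind a (a + 1))) := by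
  rw [← hA.pow_apply_ind_add_one, inner_factorial_smul_pow_apply_exp_smul_apply
    (hA.orthonormal_pow_apply_ind_add_one hc a)]

/-- Let `A` be the shift operator on `L²(ℝ)` and `N ∈ ℕ`.  Then the monomial kernel
`K(t) = t^N` is liftable: for every `t ≥ 0`,
`t^N = ⟨N! 1_{[-N,-N+1]}, exp(tA) 1_{[0,1]}⟩`. -/
theorem monomial_kernel_liftable
    (A : Lp ℝ 2 (volume : Measure ℝ) →L[ℝ] Lp ℝ 2 (volume : Measure ℝ))
    (hA : ∀ f : Lp ℝ 2 (volume : Measure ℝ), (A f : ℝ → ℝ) =ᵐ[volume] fun x => f (x + 1))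
    (N : ℕ) (t : ℝ) (ht : 0 ≤ t) :
    t ^ N = (inner ℝ ((N.factorial : ℝ) • ind (-(N : ℝ)) (-(N : ℝ) + 1))
      (NormedSpace.exp (t • A) (ind 0 1)) : ℝ) := by
  simpa using monomial_kernel_liftable_general (c := 1) (by simp) hA 0 N t
end
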